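/- Let r ≥ 5. Realize so_{2r}(ℂ) = {X ∈ gl_{2r}(ℂ) : Xᵀ·J + J·X = 0} with J = [[0, I_r],[I_r, 0]], let SO_J(ℂ) = {g : gᵀ·J·g = J, det g = 1} and O_J(ℂ) = {g : gᵀ·J·g = J}, let h₀ = [[I_r, 0],[0, −I_r]] ∈ so_{2r}(ℂ), and for X ∈ so_{2r}(ℂ) put q(X) = Σ_{i=2}^{r} X_{i,1}·X_{r+i,1}. Then {X ∈ so_{2r}(ℂ) : q(g·X·g⁻¹) = 0 for all g ∈ SO_J(ℂ)} = {t·u·h₀·u⁻¹ : t ∈ ℂ∖{0}, u ∈ O_J(ℂ)} ∪ {X ∈ so_{2r}(ℂ) : X² = 0} = {X ∈ so_{2r}(ℂ) : X² is a scalar multiple of I_{2r}}, and this set equals the Zariski closure of the cone {t·u·h₀·u⁻¹ : t ∈ ℂ∖{0}, u ∈ O_J(ℂ)}. -/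

import Mathlib

open Matrix

noncomputable section

abbrev MatB (r : ℕ) := Matrix (Fin r ⊕ Fin r) (Fin r ⊕ Fin r) ℂ

abbrev GLB (r : ℕ) := Matrix.GeneralLinearGroup (Fin r ⊕ Fin r) ℂ

/-- A subset of the space of square complex matrices is Zariski closed if it is the
common zero locus of a family of polynomials in the matrix entries. -/
def zclosed {ι : Type} (S : Set (Matrix ι ι ℂ)) : Prop :=
  ∃ T : Set (MvPolynomial (ι × ι) ℂ),
    S = {X | ∀ p ∈ T, MvPolynomial.eval (fun q => X q.1 q.2) p = 0}

/-- The Zariski closure of a set of matrices. -/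
def zclosure {ι : Type} (S : Set (Matrix ι ι ℂ)) : Set (Matrix ι ι ℂ) :=
  ⋂₀ {C | zclosed C ∧ S ⊆ C}

/-- The split symmetric form. -/
def JJ (r : ℕ) : MatB r := Matrix.fromBlocks 0 1 1 0

/-- The element `h₀`. -/
def HH (r : ℕ) : MatB r := Matrix.fromBlocks 1 0 0 (-1)

lemma JJ_sq (r : ℕ) : JJ r * JJ r = 1 := by
  simp [JJ, Matrix.fromBlocks_multiply]

lemma JJ_T (r : ℕ) : (JJ r)ᵀ = JJ r := by
  simp [JJ, Matrix.fromBlocks_transpose]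

lemma HH_sq (r : ℕ) : HH r * HH r = 1 := by
  simp [HH, Matrix.fromBlocks_multiply]

lemma HH_so (r : ℕ) : (HH r)ᵀ * JJ r + JJ r * HH r = 0 := by
  simp [HH, JJ, Matrix.fromBlocks_multiply, Matrix.fromBlocks_transpose, Matrix.fromBlocks_add]

lemma orth_inv {r : ℕ} {u : MatB r} (h : uᵀ * JJ r * u = JJ r) : (JJ r * uᵀ * JJ r) * u = 1 := by
  rw [Matrix.mul_assoc, Matrix.mul_assoc, ← Matrix.mul_assoc uᵀ, h, JJ_sq]

/-- An orthogonal matrix as an element of the general linear group. -/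
def mkO {r : ℕ} (u : MatB r) (h : uᵀ * JJ r * u = JJ r) : GLB r :=
  ⟨u, JJ r * uᵀ * JJ r, mul_eq_one_comm.mp (orth_inv h), orth_inv h⟩

lemma basisA {r : ℕ} (L : Submodule ℂ (Fin r ⊕ Fin r → ℂ)) (h : r ≤ Module.finrank ℂ L) :
    ∃ (A : Matrix (Fin r ⊕ Fin r) (Fin r) ℂ) (B : Matrix (Fin r) (Fin r ⊕ Fin r) ℂ),
      B * A = 1 ∧ ∀ j, (fun i => A i j) ∈ L := by
  obtain ⟨v, hv⟩ := exists_linearIndependent_of_le_finrank h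
  let A : Matrix (Fin r ⊕ Fin r) (Fin r) ℂ := Matrix.of fun i j => (v j).1 i
  have hli : LinearIndependent ℂ A.col := by
    have := hv.map' L.subtype (Submodule.ker_subtype L)
    exact this
  have hinj := Matrix.mulVec_injective_iff.mpr hli
  obtain ⟨g, hg⟩ := LinearMap.exists_leftInverse_of_injective (Matrix.toLin' A)
    (LinearMap.ker_eq_bot.mpr hinj)
  refine ⟨A, LinearMap.toMatrix' g, ?_, fun j => (v j).2⟩
  have : LinearMap.toMatrix' (g ∘ₗ Matrix.toLin' A) = 1 := by
    rw [hg]; simp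
  rw [LinearMap.toMatrix'_comp] at this
  simpa using this

lemma cols_orth {r : ℕ} (A D : Matrix (Fin r ⊕ Fin r) (Fin r) ℂ)
    (hA : Aᵀ * JJ r * A = 0) (hAD : Aᵀ * JJ r * D = 1) (hD : Dᵀ * JJ r * D = 0) :
    (Matrix.fromCols A D)ᵀ * JJ r * Matrix.fromCols A D = JJ r := by
  have hDA : Dᵀ * JJ r * A = 1 := by
    have := congrArg Matrix.transpose hAD
    simpa [Matrix.transpose_mul, JJ_T, Matrix.mul_assoc] using this
  rw [Matrix.transpose_fromCols, Matrix.fromRows_mul, Matrix.fromRows_mul_fromCols, hA, hAD, hD,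
    hDA, JJ]

/-- Involutions in `so` are conjugate to `h₀`. -/
lemma invol {r : ℕ} (Y : MatB r) (hY : Yᵀ * JJ r + JJ r * Y = 0) (hY2 : Y * Y = 1) :
    ∃ u : GLB r, (u : MatB r)ᵀ * JJ r * (u : MatB r) = JJ r ∧
      Y = (u : MatB r) * HH r * (↑u⁻¹ : MatB r) := by
  set P : MatB r := (1 / 2 : ℂ) • (1 + Y) with hP
  have hYP : Y = (2 : ℂ) • P - 1 := by
    rw [hP, smul_smul]; norm_num
  have hPP : P * P = P := by
    rw [hP]
    simp only [smul_mul_assoc, mul_smul_comm, add_mul, mul_add, hY2, one_mul, mul_one]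
    module
  have hPJ : Pᵀ * JJ r = JJ r * (1 - P) := by
    have h1 : Yᵀ * JJ r = - (JJ r * Y) := eq_neg_of_add_eq_zero_left hY
    rw [hP]
    simp only [Matrix.transpose_smul, Matrix.transpose_add, Matrix.transpose_one, smul_mul_assoc,
      mul_smul_comm, add_mul, mul_add, mul_sub, h1, one_mul, mul_one]
    module
  have htr : Matrix.trace Y = 0 := by
    have h1 : Yᵀ = - (JJ r * Y * JJ r) := by
      have h1 : Yᵀ * JJ r = - (JJ r * Y) := eq_neg_of_add_eq_zero_left hY
      calc Yᵀ = Yᵀ * (JJ r * JJ r) := by rw [JJ_sq, mul_one]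
        _ = _ := by rw [← mul_assoc, h1, neg_mul]
    have h2 := congrArg Matrix.trace h1
    rw [Matrix.trace_transpose, Matrix.trace_neg, Matrix.trace_mul_comm, ← mul_assoc, JJ_sq,
      one_mul] at h2
    exact self_eq_neg.mp h2
  have htP : Matrix.trace P = r := by
    rw [hP, Matrix.trace_smul, Matrix.trace_add, htr, Matrix.trace_one]
    simp
    ring
  have hproj : LinearMap.IsProj (LinearMap.range (Matrix.toLin' P)) (Matrix.toLin' P) := by
    refine ⟨fun x => LinearMap.mem_range_self _ x, ?_⟩
    rintro _ ⟨x, rfl⟩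
    simp [Matrix.toLin'_apply, Matrix.mulVec_mulVec, hPP]
  have hfr := hproj.trace
  rw [Matrix.trace_toLin'_eq, htP] at hfr
  have hfr' : r = Module.finrank ℂ (LinearMap.range (Matrix.toLin' P)) := by exact_mod_cast hfr
  obtain ⟨A, B, hBA, hAL⟩ := basisA _ hfr'.le
  have hPA : P * A = A := by
    ext i j
    have := congrFun (hproj.map_id _ (hAL j)) i
    simpa [Matrix.mul_apply, Matrix.mulVec, dotProduct] using this
  have hAtP : Aᵀ * Pᵀ = Aᵀ := by rw [← Matrix.transpose_mul, hPA]
  set D := (1 - P) * (JJ r * Bᵀ) with hD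
  have hAJ : Aᵀ * JJ r = Aᵀ * JJ r * (1 - P) := by
    rw [Matrix.mul_assoc, ← hPJ, ← Matrix.mul_assoc, hAtP]
  have hPD : P * D = 0 := by
    rw [hD, ← Matrix.mul_assoc, mul_sub, mul_one, hPP, sub_self, Matrix.zero_mul]
  have hDP : Dᵀ * Pᵀ = 0 := by rw [← Matrix.transpose_mul, hPD, Matrix.transpose_zero]
  have h1 : Aᵀ * JJ r * A = 0 := by
    rw [hAJ, Matrix.mul_assoc, Matrix.sub_mul, Matrix.one_mul, hPA, sub_self, Matrix.mul_zero]
  have h2 : Aᵀ * JJ r * D = 1 := by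
    rw [hD, ← Matrix.mul_assoc, ← hAJ, Matrix.mul_assoc, ← Matrix.mul_assoc (JJ r), JJ_sq,
      Matrix.one_mul, ← Matrix.transpose_mul, hBA, Matrix.transpose_one]
  have h3 : Dᵀ * JJ r * D = 0 := by
    have : Dᵀ * JJ r * D = Dᵀ * (JJ r * (1 - P)) * D := by
      rw [Matrix.mul_assoc, Matrix.mul_assoc, Matrix.mul_assoc, Matrix.sub_mul, hPD,
        Matrix.one_mul, sub_zero]
    rw [this, ← hPJ, ← Matrix.mul_assoc Dᵀ Pᵀ, hDP]
    simp
  have hu := cols_orth A D h1 h2 h3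
  refine ⟨mkO _ hu, hu, ?_⟩
  have hYu : Y * fromCols A D = fromCols A D * HH r := by
    rw [HH, Matrix.fromCols_mul_fromBlocks, Matrix.mul_fromCols, hYP]
    simp only [Matrix.sub_mul, Matrix.smul_mul, hPA, hPD]
    congr 1
    · simp; module
    · simp
  have : Y * (mkO _ hu : MatB r) = (mkO _ hu : MatB r) * HH r := hYu
  rw [← this, mul_assoc, Units.mul_inv, mul_one]

lemma ip_symm {r : ℕ} (x y : Fin r ⊕ Fin r → ℂ) :
    x ⬝ᵥ (JJ r *ᵥ y) = y ⬝ᵥ (JJ r *ᵥ x) := by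
  rw [Matrix.dotProduct_mulVec, ← Matrix.mulVec_transpose, JJ_T, dotProduct_comm]

lemma so_ip {r : ℕ} {X : MatB r} (hX : Xᵀ * JJ r + JJ r * X = 0) (x y : Fin r ⊕ Fin r → ℂ) :
    (X *ᵥ x) ⬝ᵥ (JJ r *ᵥ y) = - (x ⬝ᵥ (JJ r *ᵥ (X *ᵥ y))) := by
  have h1 : Xᵀ * JJ r = - (JJ r * X) := eq_neg_of_add_eq_zero_left hX
  rw [← Matrix.vecMul_transpose, ← Matrix.dotProduct_mulVec, Matrix.mulVec_mulVec, h1,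
    Matrix.neg_mulVec, dotProduct_neg, Matrix.mulVec_mulVec]

lemma JJ_nondeg (r : ℕ) (x : Fin r ⊕ Fin r → ℂ) (h : ∀ y, y ⬝ᵥ (JJ r *ᵥ x) = 0) : x = 0 := by
  have h1 : JJ r *ᵥ x = 0 := by
    ext i
    have := h (Pi.single i 1)
    simpa using this
  have h2 : JJ r *ᵥ (JJ r *ᵥ x) = 0 := by rw [h1, Matrix.mulVec_zero]
  rwa [Matrix.mulVec_mulVec, JJ_sq, Matrix.one_mulVec] at h2

/-- A square-zero element of `so` kills a Lagrangian subspace. -/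
lemma lagr_ker {r : ℕ} (X : MatB r) (hX : Xᵀ * JJ r + JJ r * X = 0) (hX2 : X * X = 0) :
    ∃ L : Submodule ℂ (Fin r ⊕ Fin r → ℂ), r ≤ Module.finrank ℂ L ∧
      (∀ x ∈ L, ∀ y ∈ L, x ⬝ᵥ (JJ r *ᵥ y) = 0) ∧ ∀ x ∈ L, X *ᵥ x = 0 := by
  let S : Set (Submodule ℂ (Fin r ⊕ Fin r → ℂ)) :=
    {L | LinearMap.range (Matrix.toLin' X) ≤ L ∧ ∀ x ∈ L, ∀ y ∈ L, x ⬝ᵥ (JJ r *ᵥ y) = 0}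
  have hS : S.Nonempty := by
    refine ⟨LinearMap.range (Matrix.toLin' X), le_rfl, ?_⟩
    rintro _ ⟨x, rfl⟩ _ ⟨y, rfl⟩
    rw [Matrix.toLin'_apply, Matrix.toLin'_apply, so_ip hX, Matrix.mulVec_mulVec y X X, hX2]
    simp
  obtain ⟨L, ⟨hLX, hiso⟩, hmax⟩ := set_has_maximal_iff_noetherian.mpr
    (inferInstance : IsNoetherian ℂ (Fin r ⊕ Fin r → ℂ)) S hS
  refine ⟨L, ?_, hiso, ?_⟩
  · by_contra hlt
    push Not at hlt
    let b := Matrix.toBilin' (JJ r)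
    have hb : ∀ x y, b x y = x ⬝ᵥ (JJ r *ᵥ y) := fun x y => Matrix.toBilin'_apply' _ _ _
    have hnd : b.Nondegenerate := by
      apply LinearMap.BilinForm.nondegenerate_toBilin'_iff_det_ne_zero.mpr
      intro h0
      have := congrArg Matrix.det (JJ_sq r)
      rw [Matrix.det_mul, h0] at this
      simp at this
    have hfo := LinearMap.BilinForm.finrank_orthogonal hnd L
    have hfV : Module.finrank ℂ (Fin r ⊕ Fin r → ℂ) = r + r := by simp
    rw [hfV] at hfo
    set O := b.orthogonal L with hO
    have hOmem : ∀ x ∈ O, ∀ y ∈ L, y ⬝ᵥ (JJ r *ᵥ x) = 0 := by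
      intro x hx y hy
      rw [← hb]
      exact LinearMap.BilinForm.mem_orthogonal_iff.mp hx y hy
    have key : ∀ K : Submodule ℂ (Fin r ⊕ Fin r → ℂ),
        Module.finrank ℂ K < Module.finrank ℂ O → ∃ x ∈ O, x ∉ K := by
      intro K hK
      by_contra hcon
      push Not at hcon
      exact absurd (Submodule.finrank_mono (show O ≤ K from hcon)) (by omega)
    obtain ⟨x, hxO, hxL⟩ := key L (by omega)
    have hf1 : Module.finrank ℂ (L ⊔ Submodule.span ℂ {x} : Submodule ℂ _) ≤
        Module.finrank ℂ L + 1 :=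
      (Submodule.finrank_add_le_finrank_add_finrank _ _).trans
        (Nat.add_le_add_left ((finrank_span_le_card ({x} : Set _)).trans (by simp)) _)
    obtain ⟨y, hyO, hyL⟩ := key (L ⊔ Submodule.span ℂ {x}) (by omega)
    have hz : ∃ z ∈ O, z ∉ L ∧ z ⬝ᵥ (JJ r *ᵥ z) = 0 := by
      by_cases hyy : y ⬝ᵥ (JJ r *ᵥ y) = 0
      · exact ⟨y, hyO, fun h => hyL (Submodule.mem_sup_left h), hyy⟩
      · obtain ⟨s, hs⟩ := exists_quadratic_eq_zero (a := y ⬝ᵥ (JJ r *ᵥ y))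
          (b := 2 * (x ⬝ᵥ (JJ r *ᵥ y))) (c := x ⬝ᵥ (JJ r *ᵥ x)) hyy
          (by
            obtain ⟨d, hd⟩ := IsAlgClosed.exists_pow_nat_eq (discrim (y ⬝ᵥ (JJ r *ᵥ y))
              (2 * (x ⬝ᵥ (JJ r *ᵥ y))) (x ⬝ᵥ (JJ r *ᵥ x))) (n := 2) (by norm_num)
            exact ⟨d, by rw [← hd, sq]⟩)
        refine ⟨x + s • y, O.add_mem hxO (O.smul_mem s hyO), ?_, ?_⟩
        · intro hmem
          by_cases hs0 : s = 0
          · apply hxL; simpa [hs0] using hmem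
          · apply hyL
            have : y = s⁻¹ • (x + s • y) + (-s⁻¹) • x := by
              rw [smul_add, smul_smul, inv_mul_cancel₀ hs0]; module
            rw [this]
            exact Submodule.add_mem_sup (L.smul_mem _ hmem)
              (Submodule.smul_mem _ _ (Submodule.mem_span_singleton_self x))
        · simp only [Matrix.mulVec_add, Matrix.mulVec_smul, dotProduct_add, add_dotProduct,
            smul_dotProduct, dotProduct_smul, smul_eq_mul, ip_symm y x]
          linear_combination hs
    obtain ⟨z, hzO, hzL, hzz⟩ := hz
    refine hmax (L ⊔ Submodule.span ℂ {z}) ⟨hLX.trans le_sup_left, ?_⟩ ?_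
    · intro p hp p' hp'
      obtain ⟨l, hl, m, hm, rfl⟩ := Submodule.mem_sup.mp hp
      obtain ⟨l', hl', m', hm', rfl⟩ := Submodule.mem_sup.mp hp'
      obtain ⟨c, rfl⟩ := Submodule.mem_span_singleton.mp hm
      obtain ⟨c', rfl⟩ := Submodule.mem_span_singleton.mp hm'
      simp only [Matrix.mulVec_add, Matrix.mulVec_smul, dotProduct_add, add_dotProduct,
            smul_dotProduct, dotProduct_smul, smul_eq_mul, ip_symm z l', hiso l hl l' hl', hzz,
            hOmem z hzO l hl, hOmem z hzO l' hl']
      simp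
    · refine lt_of_le_of_ne le_sup_left ?_
      intro h
      apply hzL
      rw [h]
      exact Submodule.mem_sup_right (Submodule.mem_span_singleton_self z)
  · intro x hx
    apply JJ_nondeg
    intro y
    have h1 := so_ip hX y x
    have h2 : (X *ᵥ y) ⬝ᵥ (JJ r *ᵥ x) = 0 := hiso _ (hLX ⟨y, by simp⟩) x hx
    rw [h2] at h1
    exact neg_eq_zero.mp h1.symm

lemma cone_so {r : ℕ} (u : GLB r) (hu : (u : MatB r)ᵀ * JJ r * (u : MatB r) = JJ r) (Z : MatB r)
    (hZ : Zᵀ * JJ r + JJ r * Z = 0) :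
    ((u : MatB r) * Z * (↑u⁻¹ : MatB r))ᵀ * JJ r + JJ r * ((u : MatB r) * Z * (↑u⁻¹ : MatB r)) = 0 := by
  have h1 : (u : MatB r) * (↑u⁻¹ : MatB r) = 1 := Units.mul_inv u
  set v : MatB r := ↑u⁻¹ with hv
  set w : MatB r := ↑u
  have h2 : JJ r * w = vᵀ * JJ r := by
    rw [← hu, ← mul_assoc, ← mul_assoc, ← Matrix.transpose_mul, h1]
    simp [hu]
  have h3 : wᵀ * JJ r = JJ r * v := by
    have := congrArg Matrix.transpose h2
    simpa [JJ_T] using this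
  calc _ = vᵀ * Zᵀ * (wᵀ * JJ r) + (JJ r * w) * Z * v := by
        simp only [Matrix.transpose_mul, mul_assoc]
    _ = vᵀ * (Zᵀ * JJ r + JJ r * Z) * v := by
        rw [h2, h3]; simp only [mul_add, add_mul, mul_assoc]
    _ = 0 := by rw [hZ]; simp

lemma conj_sq {r : ℕ} (u : GLB r) (Z : MatB r) :
    ((u : MatB r) * Z * (↑u⁻¹ : MatB r)) * ((u : MatB r) * Z * (↑u⁻¹ : MatB r)) =
     (u : MatB r) * (Z * Z) * (↑u⁻¹ : MatB r) := by
  have h1 : (↑u⁻¹ : MatB r) * (u : MatB r) = 1 := Units.inv_mul u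
  calc _ = (u : MatB r) * Z * ((↑u⁻¹ : MatB r) * (u : MatB r)) * Z * (↑u⁻¹ : MatB r) := by
        simp only [mul_assoc]
    _ = _ := by rw [h1]; simp only [mul_assoc, one_mul]

/-- A square-zero element of `so` anticommutes with an involution of `so`. -/
lemma nil_partner {r : ℕ} (X : MatB r) (hX : Xᵀ * JJ r + JJ r * X = 0) (hX2 : X * X = 0) :
    ∃ Y : MatB r, Yᵀ * JJ r + JJ r * Y = 0 ∧ Y * Y = 1 ∧ X * Y + Y * X = 0 := by
  obtain ⟨L, hr, hiso, hker⟩ := lagr_ker X hX hX2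
  obtain ⟨A, B, hBA, hAL⟩ := basisA L hr
  have hXA : X * A = 0 := by
    ext i j
    have := congrFun (hker _ (hAL j)) i
    simpa [Matrix.mul_apply, Matrix.mulVec, dotProduct] using this
  have hA : Aᵀ * JJ r * A = 0 := by
    ext i j
    have := hiso _ (hAL i) _ (hAL j)
    rw [Matrix.mul_assoc]
    simpa only [Matrix.mul_apply, Matrix.mulVec, dotProduct, Matrix.transpose_apply,
      Matrix.zero_apply] using this
  have hAX : Aᵀ * JJ r * X = 0 := by
    have h1 : JJ r * X = - (Xᵀ * JJ r) := eq_neg_of_add_eq_zero_right hX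
    rw [Matrix.mul_assoc, h1, Matrix.mul_neg, ← Matrix.mul_assoc, ← Matrix.transpose_mul, hXA]
    simp
  obtain ⟨D₀, hD₀⟩ : ∃ D₀, D₀ = JJ r * Bᵀ := ⟨_, rfl⟩
  have hAD₀ : Aᵀ * JJ r * D₀ = 1 := by
    rw [hD₀, Matrix.mul_assoc, ← Matrix.mul_assoc (JJ r), JJ_sq,
      Matrix.one_mul, ← Matrix.transpose_mul, hBA, Matrix.transpose_one]
  have hDA₀ : D₀ᵀ * JJ r * A = 1 := by
    have := congrArg Matrix.transpose hAD₀
    simpa [Matrix.transpose_mul, JJ_T, Matrix.mul_assoc] using this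
  obtain ⟨G, hG⟩ : ∃ G, G = D₀ᵀ * JJ r * D₀ := ⟨_, rfl⟩
  have hGT : Gᵀ = G := by
    rw [hG]; simp [Matrix.transpose_mul, JJ_T, Matrix.mul_assoc]
  obtain ⟨D, hD⟩ : ∃ D, D = D₀ - (1 / 2 : ℂ) • (A * G) := ⟨_, rfl⟩
  have hAD : Aᵀ * JJ r * D = 1 := by
    rw [hD, Matrix.mul_sub, hAD₀, Matrix.mul_smul, ← Matrix.mul_assoc, hA]
    simp
  have hDD : Dᵀ * JJ r * D = 0 := by
    have e1 : D₀ᵀ * JJ r * D = (1 / 2 : ℂ) • G := by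
      rw [hD, Matrix.mul_sub, Matrix.mul_smul, ← Matrix.mul_assoc, hDA₀, ← hG, Matrix.one_mul]
      module
    have e2 : Dᵀ = D₀ᵀ - (1 / 2 : ℂ) • (G * Aᵀ) := by
      rw [hD, Matrix.transpose_sub, Matrix.transpose_smul, Matrix.transpose_mul, hGT]
    rw [e2, Matrix.sub_mul, Matrix.sub_mul, e1, Matrix.smul_mul, Matrix.smul_mul, Matrix.mul_assoc G,
      Matrix.mul_assoc G, hAD, Matrix.mul_one, sub_self]
  have hu := cols_orth A D hA hAD hDD
  let u : GLB r := mkO _ hu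
  have hui : (↑u⁻¹ : MatB r) = JJ r * (fromCols A D)ᵀ * JJ r := rfl
  refine ⟨(u : MatB r) * HH r * (↑u⁻¹ : MatB r), cone_so u hu _ (HH_so r), ?_, ?_⟩
  · rw [conj_sq, HH_sq, mul_one, Units.mul_inv]
  · have hN : ∃ g, X * (u : MatB r) = (u : MatB r) * fromBlocks 0 g 0 0 := by
      refine ⟨Dᵀ * JJ r * (X * D), ?_⟩
      have h1 : (↑u⁻¹ : MatB r) * (X * (u : MatB r)) = fromBlocks 0 (Dᵀ * JJ r * (X * D)) 0 0 := by
        have hue : (u : MatB r) = fromCols A D := rfl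
        rw [hui, hue, Matrix.mul_fromCols, hXA, Matrix.mul_assoc, Matrix.mul_assoc,
          ← Matrix.mul_assoc _ (JJ r), Matrix.transpose_fromCols, Matrix.fromRows_mul,
          Matrix.fromRows_mul_fromCols, ← Matrix.mul_assoc _ X D, hAX, JJ,
          Matrix.fromBlocks_multiply]
        simp
      rw [← h1, ← mul_assoc, Units.mul_inv, one_mul]
    obtain ⟨g, hg⟩ := hN
    have hX' : X = (u : MatB r) * fromBlocks 0 g 0 0 * (↑u⁻¹ : MatB r) := by
      rw [← hg, mul_assoc, Units.mul_inv, mul_one]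
    have hac : fromBlocks 0 g 0 0 * HH r + HH r * fromBlocks 0 g 0 0 = 0 := by
      rw [HH, Matrix.fromBlocks_multiply, Matrix.fromBlocks_multiply, Matrix.fromBlocks_add]
      simp
    have hi : (↑u⁻¹ : MatB r) * (u : MatB r) = 1 := Units.inv_mul u
    have hi' : ∀ Z : MatB r, (↑u⁻¹ : MatB r) * ((u : MatB r) * Z) = Z := fun Z => by
      rw [← mul_assoc, hi, one_mul]
    rw [hX']
    calc _ = (u : MatB r) * (fromBlocks 0 g 0 0 * HH r + HH r * fromBlocks 0 g 0 0) *
          (↑u⁻¹ : MatB r) := by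
          simp only [mul_assoc, hi', mul_add, add_mul]
      _ = 0 := by rw [hac]; simp

lemma ip_eq {r : ℕ} (x y : Fin r ⊕ Fin r → ℂ) :
    x ⬝ᵥ (JJ r *ᵥ y) = ∑ i, x (Sum.inl i) * y (Sum.inr i) + ∑ i, x (Sum.inr i) * y (Sum.inl i) := by
  simp [JJ, dotProduct, Matrix.mulVec, Fintype.sum_sum_type, Matrix.one_apply]

lemma refl_swap {r : ℕ} (v w : Fin r ⊕ Fin r → ℂ) (hv : v ⬝ᵥ (JJ r *ᵥ v) = 0)
    (hw : w ⬝ᵥ (JJ r *ᵥ w) = 0) (hvw : v ⬝ᵥ (JJ r *ᵥ w) ≠ 0) :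
    ∃ R : MatB r, Rᵀ * JJ r * R = JJ r ∧ R.det = -1 ∧ R *ᵥ v = w := by
  obtain ⟨a, ha⟩ : ∃ a, a = v - w := ⟨_, rfl⟩
  obtain ⟨p, hp⟩ : ∃ p, p = v ⬝ᵥ (JJ r *ᵥ w) := ⟨_, rfl⟩
  rw [← hp] at hvw
  have haa : a ⬝ᵥ (JJ r *ᵥ a) = -2 * p := by
    rw [ha, Matrix.mulVec_sub, dotProduct_sub, sub_dotProduct, sub_dotProduct, hv, hw,
      ip_symm w v, ← hp]
    ring
  have hav : (JJ r *ᵥ a) ⬝ᵥ v = - p := by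
    rw [dotProduct_comm, ha, Matrix.mulVec_sub, dotProduct_sub, hv, ← hp]; ring
  have haJ : a ᵥ* JJ r = JJ r *ᵥ a := by
    rw [← Matrix.mulVec_transpose, JJ_T]
  refine ⟨1 + vecMulVec a (p⁻¹ • (JJ r *ᵥ a)), ?_, ?_, ?_⟩
  · have e : (1 + vecMulVec a (p⁻¹ • (JJ r *ᵥ a)))ᵀ * JJ r =
        JJ r + p⁻¹ • vecMulVec (JJ r *ᵥ a) (JJ r *ᵥ a) := by
      rw [Matrix.transpose_add, Matrix.transpose_one, Matrix.transpose_vecMulVec, add_mul, one_mul,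
        Matrix.smul_vecMulVec, Matrix.smul_mul, Matrix.vecMulVec_mul, haJ]
    rw [e, mul_add, mul_one, Matrix.mul_vecMulVec, Matrix.add_mulVec, Matrix.smul_mulVec,
      Matrix.vecMulVec_mulVec, dotProduct_comm, haa]
    ext i j
    simp [Matrix.vecMulVec_apply]
    field_simp
    ring
  · rw [Matrix.vecMulVec_eq Unit, Matrix.det_one_add_replicateCol_mul_replicateRow,
      smul_dotProduct, dotProduct_comm, haa, smul_eq_mul]
    field_simp
    norm_num
  · rw [Matrix.add_mulVec, Matrix.one_mulVec, Matrix.vecMulVec_mulVec, smul_dotProduct, hav]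
    ext i
    simp [ha, hvw]

lemma move {r : ℕ} (e v w : Fin r ⊕ Fin r → ℂ) (he : e ⬝ᵥ (JJ r *ᵥ e) = 0)
    (hv : v ⬝ᵥ (JJ r *ᵥ v) = 0)
    (hw : w ⬝ᵥ (JJ r *ᵥ w) = 0) (hvw : v ⬝ᵥ (JJ r *ᵥ w) ≠ 0) (hew : e ⬝ᵥ (JJ r *ᵥ w) ≠ 0) :
    ∃ g : GLB r, (g : MatB r)ᵀ * JJ r * (g : MatB r) = JJ r ∧ (g : MatB r).det = 1 ∧
      (↑g⁻¹ : MatB r) *ᵥ e = v := by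
  obtain ⟨R, hR, hRd, hRv⟩ := refl_swap v w hv hw hvw
  obtain ⟨T, hT, hTd, hTv⟩ := refl_swap w e hw he (by rwa [ip_symm])
  have hg : (T * R)ᵀ * JJ r * (T * R) = JJ r := by
    calc _ = Rᵀ * (Tᵀ * JJ r * T) * R := by simp only [Matrix.transpose_mul, mul_assoc]
      _ = _ := by rw [hT, hR]
  refine ⟨mkO _ hg, hg, ?_, ?_⟩
  · change (T * R).det = 1
    rw [Matrix.det_mul, hRd, hTd]; norm_num
  · have h1 : (mkO _ hg : MatB r) *ᵥ v = e := by
      change (T * R) *ᵥ v = e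
      rw [← Matrix.mulVec_mulVec, hRv, hTv]
    rw [← h1, Matrix.mulVec_mulVec, Units.inv_mul, Matrix.one_mulVec]

lemma JJ_single {r : ℕ} (k l : Fin r ⊕ Fin r) :
    JJ r k l = if l = k.swap then 1 else 0 := by
  rcases k with k | k <;> rcases l with l | l <;> simp [JJ, Matrix.one_apply, eq_comm]

lemma JJ_mulVec {r : ℕ} (v : Fin r ⊕ Fin r → ℂ) (k : Fin r ⊕ Fin r) :
    (JJ r *ᵥ v) k = v k.swap := by
  simp [Matrix.mulVec, dotProduct, JJ_single]

/-- All nonzero isotropic vectors are in the orbit of the first basis vector. -/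
lemma orbit {r : ℕ} (o t : Fin r) (hot : t ≠ o) (v : Fin r ⊕ Fin r → ℂ) (hv0 : v ≠ 0)
    (hv : v ⬝ᵥ (JJ r *ᵥ v) = 0) :
    ∃ g : GLB r, (g : MatB r)ᵀ * JJ r * (g : MatB r) = JJ r ∧ (g : MatB r).det = 1 ∧
      (↑g⁻¹ : MatB r) *ᵥ (Pi.single (Sum.inl o) 1) = v := by
  have hJJ := @JJ_single r
  have he : (Pi.single (Sum.inl o) 1 : Fin r ⊕ Fin r → ℂ) ⬝ᵥ
      (JJ r *ᵥ (Pi.single (Sum.inl o) 1)) = 0 := by simp [hJJ]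
  by_cases h1 : v (Sum.inl o) = 0
  · by_cases h2 : ∃ k, k ≠ Sum.inl o ∧ k ≠ Sum.inr o ∧ v k ≠ 0
    · obtain ⟨k, hk1, hk2, hk⟩ := h2
      have hs : k.swap ≠ Sum.inl o := by
        intro h; apply hk2; rw [← Sum.swap_swap k, h]; rfl
      have hs2 : k.swap ≠ Sum.inr o := by
        intro h; apply hk1; rw [← Sum.swap_swap k, h]; rfl
      refine move _ v (Pi.single (Sum.inr o) 1 + Pi.single k.swap 1) he hv ?_ ?_ ?_
      · rw [Matrix.mulVec_add, dotProduct_add, add_dotProduct, add_dotProduct]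
        simp [hJJ, hs, hs.symm, hk1, hk1.symm, hk2, hk2.symm]
        rcases k with k | k <;> simp
      · rw [ip_symm, add_dotProduct]
        simp [JJ_mulVec, h1, hk]
      · rw [ip_symm, add_dotProduct]
        simp [JJ_single, hk1.symm]
    · push Not at h2
      have h3 : v (Sum.inr o) ≠ 0 := by
        intro h3
        apply hv0
        ext k
        by_cases hk1 : k = Sum.inl o
        · rw [hk1, h1]; rfl
        by_cases hk2 : k = Sum.inr o
        · rw [hk2, h3]; rfl
        exact h2 k hk1 hk2
      have hvt1 := h2 (Sum.inl t) (by simpa using hot) (by simp)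
      have hvt2 := h2 (Sum.inr t) (by simp) (by simpa using hot)
      refine move _ v (Pi.single (Sum.inl o) 1 + Pi.single (Sum.inr o) 1 + Pi.single (Sum.inl t) 1
        - Pi.single (Sum.inr t) 1) he hv ?_ ?_ ?_
      · simp [Matrix.mulVec_add, Matrix.mulVec_sub, JJ, hot, hot.symm, Matrix.one_apply]
      · rw [ip_symm]
        simp [JJ_mulVec, h1, h3, hvt1, hvt2]
      · simp [Matrix.mulVec_add, Matrix.mulVec_sub, JJ, hot, hot.symm, Matrix.one_apply]
  · refine move _ v (Pi.single (Sum.inr o) 1) he hv ?_ ?_ ?_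
    · simp [JJ]
    · rw [ip_symm, ip_eq]; simpa [Pi.single_apply] using h1
    · simp [JJ]

/-- A symmetric form vanishing on the quadric is a multiple of the quadric. -/
lemma scal {r : ℕ} (o : Fin r) (M : MatB r) (hM : Mᵀ = M)
    (h : ∀ v, v ≠ 0 → v ⬝ᵥ (JJ r *ᵥ v) = 0 → v ⬝ᵥ (M *ᵥ v) = 0) :
    ∃ c : ℂ, M = c • JJ r := by
  have h' : ∀ v, v ⬝ᵥ (JJ r *ᵥ v) = 0 → v ⬝ᵥ (M *ᵥ v) = 0 := by
    intro v hv
    by_cases h0 : v = 0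
    · simp [h0]
    · exact h v h0 hv
  have hsym : ∀ k l, M k l = M l k := fun k l => by
    conv_lhs => rw [← hM, Matrix.transpose_apply]
  have hd : ∀ k, M k k = 0 := by
    intro k
    have := h' (Pi.single k 1) (by rcases k with k | k <;> simp [JJ])
    simpa using this
  have hkl : ∀ k l, l ≠ k.swap → M k l = 0 := by
    intro k l hl
    by_cases hkl : k = l
    · rw [← hkl]; exact hd k
    have hl' : k ≠ l.swap := by
      intro hh; apply hl; rw [hh, Sum.swap_swap]
    have := h' (Pi.single k 1 + Pi.single l 1) (by
      simp [Matrix.mulVec_add, JJ_single, hl, hl']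
      rcases k with k | k <;> rcases l with l | l <;> simp)
    simp [Matrix.mulVec_add, hd, hsym l k] at this
    exact this
  have hc : ∀ i j, M (Sum.inl i) (Sum.inr i) = M (Sum.inl j) (Sum.inr j) := by
    intro i j
    by_cases hij : i = j
    · rw [hij]
    have hji : ¬ j = i := fun h => hij h.symm
    have := h' (Pi.single (Sum.inl i) 1 + Pi.single (Sum.inr i) 1 + Pi.single (Sum.inl j) 1
        - Pi.single (Sum.inr j) 1) (by
      simp [Matrix.mulVec_add, Matrix.mulVec_sub, JJ, hij, hji, Matrix.one_apply])
    have a1 : M (Sum.inl i) (Sum.inr j) = 0 := hkl _ _ (by simpa using hji)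
    have a2 : M (Sum.inl j) (Sum.inr i) = 0 := hkl _ _ (by simpa using hij)
    have a3 : M (Sum.inl i) (Sum.inl j) = 0 := hkl _ _ (by simp)
    have a4 : M (Sum.inr i) (Sum.inr j) = 0 := hkl _ _ (by simp)
    simp [Matrix.mulVec_add, Matrix.mulVec_sub, hd, hsym (Sum.inr _) (Sum.inl _),
      hsym (Sum.inl j) (Sum.inl i), hsym (Sum.inr j) (Sum.inr i), a1, a2, a3, a4] at this
    linear_combination this / 2
  refine ⟨M (Sum.inl o) (Sum.inr o), ?_⟩
  ext k l
  rw [Matrix.smul_apply, JJ_single]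
  by_cases hl : l = k.swap
  · rw [if_pos hl, hl]
    rcases k with k | k
    · simpa using hc k o
    · rw [hsym]; simpa using hc k o
  · rw [if_neg hl, hkl k l hl]; simp

lemma two_q {r : ℕ} (h0 : 0 < r) (Z : MatB r) (hZ : Zᵀ * JJ r + JJ r * Z = 0) :
    2 * (∑ i : Fin r, if (i : ℕ) = 0 then 0 else
      Z (Sum.inl i) (Sum.inl ⟨0, h0⟩) * Z (Sum.inr i) (Sum.inl ⟨0, h0⟩)) =
    (Z *ᵥ (Pi.single (Sum.inl ⟨0, h0⟩) 1)) ⬝ᵥ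
      (JJ r *ᵥ (Z *ᵥ (Pi.single (Sum.inl ⟨0, h0⟩) 1))) := by
  have hz : Z (Sum.inr ⟨0, h0⟩) (Sum.inl ⟨0, h0⟩) = 0 := by
    have h1 := so_ip hZ (Pi.single (Sum.inl ⟨0, h0⟩) 1) (Pi.single (Sum.inl ⟨0, h0⟩) 1)
    rw [ip_symm] at h1
    have h2 := self_eq_neg.mp h1
    simpa only [single_one_dotProduct, JJ_mulVec, Matrix.mulVec_single_one, Sum.swap_inl,
      Matrix.col_apply] using h2
  rw [ip_eq]
  simp only [Matrix.mulVec_single_one, Matrix.col_apply]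
  have e : ∀ i : Fin r, (if (i : ℕ) = 0 then 0 else
      Z (Sum.inl i) (Sum.inl ⟨0, h0⟩) * Z (Sum.inr i) (Sum.inl ⟨0, h0⟩)) =
      Z (Sum.inl i) (Sum.inl ⟨0, h0⟩) * Z (Sum.inr i) (Sum.inl ⟨0, h0⟩) := by
    intro i
    split_ifs with hi
    · have : i = ⟨0, h0⟩ := Fin.ext hi
      rw [this, hz, mul_zero]
    · rfl
  simp only [e]
  rw [two_mul]
  congr 1
  exact Finset.sum_congr rfl fun i _ => mul_comm _ _

lemma gip {r : ℕ} (g : GLB r) (hg : (g : MatB r)ᵀ * JJ r * (g : MatB r) = JJ r)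
    (x y : Fin r ⊕ Fin r → ℂ) :
    ((g : MatB r) *ᵥ x) ⬝ᵥ (JJ r *ᵥ ((g : MatB r) *ᵥ y)) = x ⬝ᵥ (JJ r *ᵥ y) := by
  rw [← Matrix.vecMul_transpose, ← Matrix.dotProduct_mulVec, Matrix.mulVec_mulVec,
    Matrix.mulVec_mulVec, hg]

lemma q_conj {r : ℕ} (h0 : 0 < r) (X : MatB r) (hX : Xᵀ * JJ r + JJ r * X = 0) (g : GLB r)
    (hg : (g : MatB r)ᵀ * JJ r * (g : MatB r) = JJ r) :
    2 * (∑ i : Fin r, if (i : ℕ) = 0 then 0 else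
      ((g : MatB r) * X * (↑g⁻¹ : MatB r)) (Sum.inl i) (Sum.inl ⟨0, h0⟩) *
      ((g : MatB r) * X * (↑g⁻¹ : MatB r)) (Sum.inr i) (Sum.inl ⟨0, h0⟩)) =
    - (((↑g⁻¹ : MatB r) *ᵥ (Pi.single (Sum.inl ⟨0, h0⟩) 1)) ⬝ᵥ
      ((JJ r * (X * X)) *ᵥ ((↑g⁻¹ : MatB r) *ᵥ (Pi.single (Sum.inl ⟨0, h0⟩) 1)))) := by
  rw [two_q h0 _ (cone_so g hg X hX)]
  rw [← Matrix.mulVec_mulVec, ← Matrix.mulVec_mulVec, gip g hg, so_ip hX, ← Matrix.mulVec_mulVec,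
    ← Matrix.mulVec_mulVec]

lemma part1 {r : ℕ} (h2 : 2 ≤ r) (h0 : 0 < r) (X : MatB r) (hX : Xᵀ * JJ r + JJ r * X = 0) :
    (∀ g : GLB r, (g : MatB r)ᵀ * JJ r * (g : MatB r) = JJ r ∧ (g : MatB r).det = 1 →
      (∑ i : Fin r, if (i : ℕ) = 0 then 0 else
      ((g : MatB r) * X * (↑g⁻¹ : MatB r)) (Sum.inl i) (Sum.inl ⟨0, h0⟩) *
      ((g : MatB r) * X * (↑g⁻¹ : MatB r)) (Sum.inr i) (Sum.inl ⟨0, h0⟩)) = 0) ↔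
    ∃ c : ℂ, X * X = c • (1 : MatB r) := by
  constructor
  · intro h
    have hM : (JJ r * (X * X))ᵀ = JJ r * (X * X) := by
      have h1 : Xᵀ * JJ r = - (JJ r * X) := eq_neg_of_add_eq_zero_left hX
      rw [Matrix.transpose_mul, Matrix.transpose_mul, JJ_T, mul_assoc, h1, mul_neg, ← mul_assoc,
        h1, neg_mul, neg_neg, mul_assoc]
    obtain ⟨c, hc⟩ := scal ⟨0, h0⟩ (JJ r * (X * X)) hM (by
      intro v hv0 hv
      obtain ⟨g, hg, hgd, hgv⟩ := orbit (⟨0, h0⟩ : Fin r) ⟨1, h2⟩ (by simp) v hv0 hv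
      have h3 := q_conj h0 X hX g hg
      rw [h g ⟨hg, hgd⟩, hgv, mul_zero] at h3
      exact neg_eq_zero.mp h3.symm)
    refine ⟨c, ?_⟩
    calc X * X = JJ r * (JJ r * (X * X)) := by rw [← mul_assoc, JJ_sq, one_mul]
      _ = _ := by rw [hc, mul_smul_comm, JJ_sq]
  · rintro ⟨c, hc⟩ g ⟨hg, -⟩
    have h3 := q_conj h0 X hX g hg
    have hi : ∀ x y : Fin r ⊕ Fin r → ℂ, ((↑g⁻¹ : MatB r) *ᵥ x) ⬝ᵥ
        (JJ r *ᵥ ((↑g⁻¹ : MatB r) *ᵥ y)) = x ⬝ᵥ (JJ r *ᵥ y) := by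
      intro x y
      have e : ∀ z : Fin r ⊕ Fin r → ℂ, (g : MatB r) *ᵥ ((↑g⁻¹ : MatB r) *ᵥ z) = z := by
        intro z
        rw [Matrix.mulVec_mulVec, Units.mul_inv, Matrix.one_mulVec]
      conv_rhs => rw [← e x, ← e y]
      rw [gip g hg]
    rw [hc, mul_smul_comm, mul_one, Matrix.smul_mulVec, dotProduct_smul, hi] at h3
    simpa [JJ] using h3

lemma part2 {r : ℕ} (X : MatB r) (hX : Xᵀ * JJ r + JJ r * X = 0) (c : ℂ) (hc0 : c ≠ 0)
    (hc : X * X = c • (1 : MatB r)) :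
    ∃ t : ℂ, t ≠ 0 ∧ ∃ u : GLB r, (u : MatB r)ᵀ * JJ r * (u : MatB r) = JJ r ∧
      X = t • ((u : MatB r) * HH r * (↑u⁻¹ : MatB r)) := by
  obtain ⟨t, ht⟩ := IsAlgClosed.exists_pow_nat_eq c (n := 2) (by norm_num)
  have ht0 : t ≠ 0 := by
    rintro rfl
    apply hc0; rw [← ht]; norm_num
  obtain ⟨u, hu, hY⟩ := invol (t⁻¹ • X)
    (by rw [Matrix.transpose_smul, smul_mul_assoc, mul_smul_comm, ← smul_add, hX, smul_zero])
    (by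
      rw [smul_mul_assoc, mul_smul_comm, hc, smul_smul, smul_smul, ← ht]
      field_simp
      simp)
  refine ⟨t, ht0, u, hu, ?_⟩
  rw [← hY, smul_smul, mul_inv_cancel₀ ht0, one_smul]

lemma zclosed_target (r : ℕ) :
    zclosed {X : MatB r | Xᵀ * JJ r + JJ r * X = 0 ∧ ∃ c : ℂ, X * X = c • (1 : MatB r)} := by
  let G : Matrix (Fin r ⊕ Fin r) (Fin r ⊕ Fin r)
    (MvPolynomial ((Fin r ⊕ Fin r) × (Fin r ⊕ Fin r)) ℂ) := Matrix.of fun i j => MvPolynomial.X (i, j)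
  let JG := (JJ r).map (MvPolynomial.C (σ := (Fin r ⊕ Fin r) × (Fin r ⊕ Fin r)))
  refine ⟨{p | (∃ i j, p = (Gᵀ * JG + JG * G) i j) ∨ (∃ i j, i ≠ j ∧ p = (G * G) i j) ∨
    ∃ i j, p = (G * G) i i - (G * G) j j}, ?_⟩
  have e1 : ∀ (X : MatB r) i j, MvPolynomial.eval (fun q => X q.1 q.2) ((Gᵀ * JG + JG * G) i j) =
      (Xᵀ * JJ r + JJ r * X) i j := by
    intro X i j
    simp [Matrix.mul_apply, G, JG]
  have e2 : ∀ (X : MatB r) i j, MvPolynomial.eval (fun q => X q.1 q.2) ((G * G) i j) =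
      (X * X) i j := by
    intro X i j
    simp [Matrix.mul_apply, G]
  ext X
  constructor
  · rintro ⟨hX, c, hc⟩ p hp
    rcases hp with ⟨i, j, rfl⟩ | ⟨i, j, hij, rfl⟩ | ⟨i, j, rfl⟩
    · rw [e1, hX]; rfl
    · rw [e2, hc]; simp [hij]
    · rw [map_sub, e2, e2, hc]; simp
  · intro h
    refine ⟨?_, ?_⟩
    · ext i j
      rw [← e1]
      exact h _ (Or.inl ⟨i, j, rfl⟩)
    · rcases isEmpty_or_nonempty (Fin r ⊕ Fin r) with he | ⟨⟨k⟩⟩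
      · exact ⟨0, Subsingleton.elim _ _⟩
      · refine ⟨(X * X) k k, ?_⟩
        ext i j
        by_cases hij : i = j
        · subst hij
          have := h _ (Or.inr (Or.inr ⟨i, k, rfl⟩))
          rw [map_sub, e2, e2] at this
          simpa using sub_eq_zero.mp this
        · rw [← e2, h _ (Or.inr (Or.inl ⟨i, j, hij, rfl⟩))]
          simp [hij]

lemma poly_curve {ι : Type} (p : MvPolynomial (ι × ι) ℂ) (X Y : Matrix ι ι ℂ)
    (h : ∀ t : ℂ, t ≠ 0 → MvPolynomial.eval (fun q => (X + t • Y) q.1 q.2) p = 0) :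
    MvPolynomial.eval (fun q => X q.1 q.2) p = 0 := by
  let P : Polynomial ℂ := MvPolynomial.aeval
    (fun q : ι × ι => Polynomial.C (X q.1 q.2) + Polynomial.X * Polynomial.C (Y q.1 q.2)) p
  have hP : ∀ t : ℂ, P.eval t = MvPolynomial.eval (fun q => (X + t • Y) q.1 q.2) p := by
    intro t
    have := MvPolynomial.comp_aeval_apply (R := ℂ)
      (fun q : ι × ι => Polynomial.C (X q.1 q.2) + Polynomial.X * Polynomial.C (Y q.1 q.2))
      (Polynomial.aeval t) p
    simp only [P]
    rw [← Polynomial.coe_aeval_eq_eval, this, MvPolynomial.aeval_eq_eval]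
    simp only [map_add, map_mul, Polynomial.aeval_C, Polynomial.aeval_X, Matrix.add_apply,
      Matrix.smul_apply, smul_eq_mul, Algebra.algebraMap_self, RingHom.id_apply]
  have hP0 : P = 0 := by
    apply Polynomial.eq_zero_of_infinite_isRoot
    refine Set.Infinite.mono (s := {0}ᶜ) ?_ (Set.finite_singleton (0 : ℂ)).infinite_compl
    intro t ht
    exact (hP t).trans (h t ht)
  have := hP 0
  rw [hP0] at this
  simpa using this.symm

theorem stmt_18 (r : ℕ) (hr : 5 ≤ r)
    (J : MatB r) (hJ : J = Matrix.fromBlocks 0 1 1 0)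
    -- `so_{2r}(ℂ)`
    (so : Set (MatB r)) (hso : so = {X | Xᵀ * J + J * X = 0})
    -- `SO_J(ℂ)` and `O_J(ℂ)`
    (SOJ OJ : Set (GLB r))
    (hSOJ : SOJ = {g : GLB r | (↑g : MatB r)ᵀ * J * (↑g : MatB r) = J ∧
      (↑g : MatB r).det = 1})
    (hOJ : OJ = {g : GLB r | (↑g : MatB r)ᵀ * J * (↑g : MatB r) = J})
    -- `h₀`
    (h₀ : MatB r) (hh₀ : h₀ = Matrix.fromBlocks 1 0 0 (-1))
    -- `q(X) = Σ_{i=2}^r X_{i,1}·X_{r+i,1}`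
    (q : MatB r → ℂ)
    (hq : q = fun X => ∑ i : Fin r, if (i : ℕ) = 0 then 0 else
      X (Sum.inl i) (Sum.inl ⟨0, by omega⟩) * X (Sum.inr i) (Sum.inl ⟨0, by omega⟩))
    -- the cone `{t·u·h₀·u⁻¹ : t ∈ ℂ∖{0}, u ∈ O_J(ℂ)}`
    (C : Set (MatB r))
    (hC : C = {X | ∃ t : ℂ, t ≠ 0 ∧ ∃ u ∈ OJ,
      X = t • ((↑u : MatB r) * h₀ * (↑u⁻¹ : MatB r))}) :
    {X ∈ so | ∀ g ∈ SOJ, q ((↑g : MatB r) * X * (↑g⁻¹ : MatB r)) = 0} =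
      C ∪ {X ∈ so | X * X = 0} ∧
    C ∪ {X ∈ so | X * X = 0} = {X ∈ so | ∃ c : ℂ, X * X = c • (1 : MatB r)} ∧
    {X ∈ so | ∀ g ∈ SOJ, q ((↑g : MatB r) * X * (↑g⁻¹ : MatB r)) = 0} = zclosure C := by
  obtain rfl : J = JJ r := hJ
  obtain rfl : h₀ = HH r := hh₀
  have hso' : ∀ X, X ∈ so ↔ Xᵀ * JJ r + JJ r * X = 0 := fun X => by rw [hso]; rfl
  have hA : {X ∈ so | ∀ g ∈ SOJ, q ((↑g : MatB r) * X * (↑g⁻¹ : MatB r)) = 0} =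
      {X ∈ so | ∃ c : ℂ, X * X = c • (1 : MatB r)} := by
    ext X
    refine and_congr_right fun hX => ?_
    rw [← part1 (by omega) (by omega) X ((hso' X).mp hX), hSOJ, hq]
    rfl
  have hCsub : C ⊆ {X ∈ so | ∃ c : ℂ, X * X = c • (1 : MatB r)} := by
    intro X hX
    rw [hC] at hX
    obtain ⟨t, ht, u, hu, rfl⟩ := hX
    rw [hOJ] at hu
    refine ⟨(hso' _).mpr ?_, t * t, ?_⟩
    · rw [Matrix.transpose_smul, smul_mul_assoc, mul_smul_comm, ← smul_add,
        cone_so u hu _ (HH_so r), smul_zero]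
    · rw [smul_mul_assoc, mul_smul_comm, conj_sq, HH_sq, mul_one, Units.mul_inv, smul_smul]
  have hCmem : ∀ X ∈ so, ∀ c : ℂ, c ≠ 0 → X * X = c • (1 : MatB r) → X ∈ C := by
    intro X hX c hc0 hc
    obtain ⟨t, ht, u, hu, h⟩ := part2 X ((hso' X).mp hX) c hc0 hc
    rw [hC]
    exact ⟨t, ht, u, by rw [hOJ]; exact hu, h⟩
  have hB : C ∪ {X ∈ so | X * X = 0} = {X ∈ so | ∃ c : ℂ, X * X = c • (1 : MatB r)} := by
    apply Set.Subset.antisymm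
    · rintro X (hX | ⟨hX, h⟩)
      · exact hCsub hX
      · exact ⟨hX, 0, by rw [h, zero_smul]⟩
    · rintro X ⟨hX, c, hc⟩
      by_cases hc0 : c = 0
      · right; exact ⟨hX, by rw [hc, hc0, zero_smul]⟩
      · left; exact hCmem X hX c hc0 hc
  refine ⟨hA.trans hB.symm, hB, ?_⟩
  rw [hA]
  apply Set.Subset.antisymm
  · rw [← hB]
    rintro X (hX | ⟨hX, h⟩)
    · exact fun S hS => hS.2 hX
    · rintro S ⟨⟨T, rfl⟩, hCS⟩ p hp
      obtain ⟨Y, hY, hY2, hXY⟩ := nil_partner X ((hso' X).mp hX) h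
      refine poly_curve p X Y fun t ht => ?_
      refine hCS (hCmem (X + t • Y) ?_ (t * t) (mul_ne_zero ht ht) ?_) p hp
      · rw [hso', Matrix.transpose_add, Matrix.transpose_smul, add_mul, mul_add, smul_mul_assoc,
          mul_smul_comm]
        have hX' := (hso' X).mp hX
        calc _ = (Xᵀ * JJ r + JJ r * X) + t • (Yᵀ * JJ r + JJ r * Y) := by
              rw [smul_add]; abel
          _ = 0 := by rw [hX', hY]; simp
      · calc _ = X * X + t • (X * Y + Y * X) + (t * t) • (Y * Y) := by
              simp only [add_mul, mul_add, smul_mul_assoc, mul_smul_comm, smul_add, smul_smul]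
              abel
          _ = _ := by rw [h, hXY, hY2]; simp
  · apply Set.sInter_subset_of_mem
    refine ⟨?_, hCsub⟩
    have := zclosed_target r
    rw [hso]
    exact this
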